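/- Fix integers n, u, v, w with u ≥ 1, 2u ≤ n, v ≥ 2, w ≥ 2, and let Q ≥ 1 be an integer. Let nxt be any deterministic adaptive oracle algorithm with input space ({0,1}^u)^v, with query sequence q_1, q_2, … produced by running it with oracle RO on input X. The probability over a uniformly random oracle RO : {0,1}^n → {0,1}^n and a uniformly random input X ∈ ({0,1}^u)^v that there exist j with 1 ≤ j ≤ w−1 and k with 1 ≤ k ≤ Q such that q_k = s_{j+1} while q_t ≠ s_j for all t < k, is at most (w−1)·Q·2^(−u). -/

import Mathlib

/-- Probability of `P` under the uniform distribution on a finite type `Ω`. -/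
noncomputable def unifProb {Ω : Type} [Fintype Ω] (P : Ω → Prop) : ℝ :=
  (Set.ncard {ω : Ω | P ω} : ℝ) / (Fintype.card Ω : ℝ)
/-- Bit strings of length `k`. -/
abbrev Bits (k : ℕ) := Fin k → Bool

/-- The `j`-th bit (`0`-based) of a bit string, `false` out of range. -/
def bitAt {k : ℕ} (y : Bits k) (j : ℕ) : Bool := if h : j < k then y ⟨j, h⟩ else false

/-- The `i`-th block (`0`-based) of the input `X = (x_1, …, x_v)`. -/
def getX {u v : ℕ} (X : Fin v → Bits u) (i : ℕ) : Bits u :=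
  if h : i < v then X ⟨i, h⟩ else fun _ => false
/-- The SimLine query string built from the step counter `k` (`0`-based, so paper index
`k+1`) and the current chain value `r`: the concatenation of `x_{(k mod v)+1}` (1-based),
`r`, and `n − 2u` zeros. -/
def simStr (n u v : ℕ) (X : Fin v → Bits u) (k : ℕ) (r : Bits u) : Bits n := fun j =>
  if (j : ℕ) < u then bitAt (getX X (k % v)) (j : ℕ)
  else if (j : ℕ) < 2 * u then bitAt r ((j : ℕ) - u)
  else false

/-- `simR n u v RO X k` is the paper's `r_{k+1}`:  `r_1 = 0^u` and
`r_{i+1} = ` the first `u` bits of `RO(s_i)`. -/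
def simR (n u v : ℕ) (RO : Bits n → Bits n) (X : Fin v → Bits u) : ℕ → Bits u
  | 0 => fun _ => false
  | k + 1 => fun j => bitAt (RO (simStr n u v X k (simR n u v RO X k))) (j : ℕ)

/-- `simS n u v RO X k` is the paper's `s_{k+1}`. -/
def simS (n u v : ℕ) (RO : Bits n → Bits n) (X : Fin v → Bits u) (k : ℕ) : Bits n :=
  simStr n u v X k (simR n u v RO X k)
/-- Answers to the first `t` queries of a deterministic adaptive oracle algorithm whose
next-query function is `f`. -/
def advAns (n : ℕ) (RO : Bits n → Bits n) (f : List (Bits n) → Bits n) : ℕ → List (Bits n)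
  | 0 => []
  | t + 1 => advAns n RO f t ++ [RO (f (advAns n RO f t))]

/-- The `(t+1)`-st query (so the paper's `q_{t+1}`) of the adaptive algorithm `f`. -/
def advQ (n : ℕ) (RO : Bits n → Bits n) (f : List (Bits n) → Bits n) (t : ℕ) : Bits n :=
  f (advAns n RO f t)

/-! Fix `X`. If the `k`-th query is `s_{j+1}` and `s_j` has not been queried before, let `s_i` be
the first occurrence of the value `s_j` on the chain, so `i ≤ j`. Then the `u`-bit chain part of the
`k`-th query is the prefix of `RO(s_i)`, although neither the chain up to `s_i` nor the first `k`
queries depend on the value of `RO` at `s_i`. Exchanging that value with an independent uniform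
string shows that this has probability at most `2^(-u)`. The union bound runs over the pairs
`(i, k)`: for a single `j` the index `i` is itself random when the chain has a cycle. -/

section UniformProbability

variable {Ω Ω' : Type} [Fintype Ω] [Fintype Ω']

theorem unifProb_le_of_injOn (hcard : Fintype.card Ω = Fintype.card Ω') {P : Ω → Prop}
    {P' : Ω' → Prop} (f : Ω → Ω') (hmaps : ∀ ω, P ω → P' (f ω)) (hinj : Set.InjOn f {ω | P ω}) :
    unifProb P ≤ unifProb P' := by
  unfold unifProb
  rw [hcard]
  gcongr
  exact Set.ncard_le_ncard_of_injOn f hmaps hinj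

theorem unifProb_mono {P P' : Ω → Prop} (h : ∀ ω, P ω → P' ω) : unifProb P ≤ unifProb P' :=
  unifProb_le_of_injOn rfl id h (Set.injOn_id _)

theorem unifProb_comp_equiv (e : Ω ≃ Ω') (P : Ω' → Prop) :
    unifProb (fun ω => P (e ω)) = unifProb P := by
  apply le_antisymm
  · exact unifProb_le_of_injOn (Fintype.card_congr e) e (fun _ h => h) e.injective.injOn
  · exact unifProb_le_of_injOn (Fintype.card_congr e.symm) e.symm
      (fun ω h => by rwa [e.apply_symm_apply]) e.symm.injective.injOn

theorem unifProb_eq_const (a : Ω) : unifProb (fun ω => ω = a) = 1 / Fintype.card Ω := by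
  simp [unifProb]

theorem unifProb_comp_fst [Nonempty Ω'] (P : Ω → Prop) :
    unifProb (fun p : Ω × Ω' => P p.1) = unifProb P := by
  have hprod : {p : Ω × Ω' | P p.1} = {ω | P ω} ×ˢ Set.univ := by ext; simp
  have hcard : (Fintype.card Ω' : ℝ) ≠ 0 := Nat.cast_ne_zero.mpr Fintype.card_ne_zero
  simp only [unifProb, hprod, Set.ncard_prod, Set.ncard_univ, Nat.card_eq_fintype_card,
    Fintype.card_prod, Nat.cast_mul]
  exact mul_div_mul_right _ _ hcard

theorem unifProb_prod (P : Ω × Ω' → Prop) :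
    unifProb P = (∑ ω', unifProb fun ω => P (ω, ω')) / Fintype.card Ω' := by
  classical
  have hcount : Set.ncard {p | P p} = ∑ ω', Set.ncard {ω | P (ω, ω')} := by
    simp only [Set.ncard_eq_toFinset_card', Set.toFinset_ofPred, Finset.card_filter,
      Fintype.sum_prod_type_right]
  simp only [unifProb, hcount, Fintype.card_prod, Nat.cast_mul, Nat.cast_sum, ← Finset.sum_div,
    div_div]

theorem unifProb_prod_le [Nonempty Ω'] {P : Ω × Ω' → Prop} {c : ℝ}
    (h : ∀ ω', unifProb (fun ω => P (ω, ω')) ≤ c) : unifProb P ≤ c := by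
  rw [unifProb_prod, div_le_iff₀ (Nat.cast_pos.mpr Fintype.card_pos), mul_comm]
  simpa using Finset.sum_le_card_nsmul Finset.univ _ c fun ω' _ => h ω'

theorem unifProb_exists_mem_le {ι : Type*} (s : Finset ι) (P : ι → Ω → Prop) :
    unifProb (fun ω => ∃ i ∈ s, P i ω) ≤ ∑ i ∈ s, unifProb (P i) := by
  have hunion : {ω | ∃ i ∈ s, P i ω} = ⋃ i ∈ s, {ω | P i ω} := by ext; simp
  simp only [unifProb, hunion, ← Finset.sum_div]
  gcongr
  exact_mod_cast Finset.set_ncard_biUnion_le s _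

end UniformProbability

theorem unifProb_le_of_update_invariant {α β : Type} [Fintype α] [DecidableEq α] [Fintype β]
    [Nonempty β] {P : (α → β) → Prop} (s : (α → β) → α) (T : (α → β) → β → Prop) {c : ℝ}
    (hs : ∀ R, P R → ∀ b, s (Function.update R (s R) b) = s R)
    (hT : ∀ R, P R → ∀ b, T (Function.update R (s R) b) = T R)
    (hmem : ∀ R, P R → T R (R (s R))) (hc : ∀ R, unifProb (T R) ≤ c) :
    unifProb P ≤ c := by
  -- By `hs`, exchanging `R (s R)` with a fresh `b` is undone by a second exchange; the string
  -- left outside the oracle is then the old `R (s R)`, and it has to hit `T` of the new oracle.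
  let exchange (p : (α → β) × β) : β × (α → β) := (p.1 (s p.1), Function.update p.1 (s p.1) p.2)
  let exchangeBack (p : β × (α → β)) : (α → β) × β :=
    (Function.update p.2 (s p.2) p.1, p.2 (s p.2))
  have hleft : Set.LeftInvOn exchangeBack exchange {p | P p.1} := by
    rintro ⟨R, b⟩ hP
    simp [exchange, exchangeBack, hs R hP b]
  calc unifProb P
      = unifProb (fun p : (α → β) × β => P p.1) := (unifProb_comp_fst P).symm
    _ ≤ unifProb (fun p : β × (α → β) => T p.2 p.1) := by
        refine unifProb_le_of_injOn (by simp [mul_comm]) exchange ?_ hleft.injOn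
        rintro ⟨R, b⟩ hP
        simpa only [exchange, hT R hP b] using hmem R hP
    _ ≤ c := unifProb_prod_le hc

/-- The first `u` bits of `z`; this is how an oracle answer determines the next chain value. -/
def prefixBits {n : ℕ} (u : ℕ) (z : Bits n) : Bits u := fun j => bitAt z j

/-- Bits `u, …, 2u − 1` of `z`, the position of the chain value `r` in a SimLine query string. -/
def chainBits {n : ℕ} (u : ℕ) (z : Bits n) : Bits u := fun j => bitAt z (u + j)

theorem unifProb_prefixBits_eq {n u : ℕ} (hun : u ≤ n) (c : Bits u) :
    unifProb (fun z : Bits n => prefixBits u z = c) = 1 / 2 ^ u := by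
  obtain ⟨m, rfl⟩ := Nat.exists_eq_add_of_le hun
  have happend (p : Bits u × Bits m) : prefixBits u (Fin.appendEquiv u m p) = p.1 := by
    funext j
    have hj : (j : ℕ) < u + m := by omega
    simp only [prefixBits, bitAt, hj, dite_true]
    exact Fin.append_left p.1 p.2 j
  calc unifProb (fun z : Bits (u + m) => prefixBits u z = c)
      = unifProb (fun p : Bits u × Bits m => prefixBits u (Fin.appendEquiv u m p) = c) :=
        (unifProb_comp_equiv (Fin.appendEquiv u m) _).symm
    _ = unifProb (fun p : Bits u × Bits m => p.1 = c) := by simp only [happend]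
    _ = unifProb (fun r : Bits u => r = c) := unifProb_comp_fst (· = c)
    _ = 1 / 2 ^ u := by simp [unifProb_eq_const]

section Chain

variable {n u v : ℕ}

theorem chainBits_simS (hn : 2 * u ≤ n) (R : Bits n → Bits n) (X : Fin v → Bits u) (k : ℕ) :
    chainBits u (simS n u v R X k) = simR n u v R X k := by
  funext j
  have hjn : u + (j : ℕ) < n := by omega
  have hju : u + (j : ℕ) < 2 * u := by omega
  simp [chainBits, simS, simStr, bitAt, hjn, hju]

theorem simR_succ (R : Bits n → Bits n) (X : Fin v → Bits u) (k : ℕ) :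
    simR n u v R X (k + 1) = prefixBits u (R (simS n u v R X k)) :=
  rfl

theorem simR_congr {R R' : Bits n → Bits n} {X : Fin v → Bits u} {i : ℕ}
    (h : ∀ m < i, R' (simS n u v R X m) = R (simS n u v R X m)) :
    simR n u v R' X i = simR n u v R X i := by
  induction i with
  | zero => rfl
  | succ i ih =>
    have hsimS : simS n u v R' X i = simS n u v R X i :=
      congrArg (simStr n u v X i) (ih fun m hm => h m (by omega))
    rw [simR_succ, simR_succ, hsimS, h i (by omega)]

theorem simS_congr {R R' : Bits n → Bits n} {X : Fin v → Bits u} {i : ℕ}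
    (h : ∀ m < i, R' (simS n u v R X m) = R (simS n u v R X m)) :
    simS n u v R' X i = simS n u v R X i :=
  congrArg (simStr n u v X i) (simR_congr h)

theorem advAns_congr {R R' : Bits n → Bits n} {f : List (Bits n) → Bits n} {k : ℕ}
    (h : ∀ t < k, R' (advQ n R f t) = R (advQ n R f t)) :
    advAns n R' f k = advAns n R f k := by
  induction k with
  | zero => rfl
  | succ k ih =>
    have hanswer : R' (f (advAns n R f k)) = R (f (advAns n R f k)) := h k (by omega)
    rw [advAns, advAns, ih fun t ht => h t (by omega), hanswer]

theorem advQ_congr {R R' : Bits n → Bits n} {f : List (Bits n) → Bits n} {k : ℕ}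
    (h : ∀ t < k, R' (advQ n R f t) = R (advQ n R f t)) :
    advQ n R' f k = advQ n R f k :=
  congrArg f (advAns_congr h)

/-- The event that query `k` guesses the prefix of the oracle answer at `s_i` although that answer
has influenced neither the chain up to `s_i` nor the queries up to `k` (indices `0`-based). -/
def FreshGuess (X : Fin v → Bits u) (f : List (Bits n) → Bits n) (i k : ℕ)
    (R : Bits n → Bits n) : Prop :=
  (∀ m < i, simS n u v R X m ≠ simS n u v R X i) ∧
  (∀ t < k, advQ n R f t ≠ simS n u v R X i) ∧
  prefixBits u (R (simS n u v R X i)) = chainBits u (advQ n R f k)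

theorem unifProb_freshGuess_le (hun : u ≤ n) (X : Fin v → Bits u)
    (f : List (Bits n) → Bits n) (i k : ℕ) : unifProb (FreshGuess X f i k) ≤ 1 / 2 ^ u := by
  apply unifProb_le_of_update_invariant (fun R => simS n u v R X i)
    (fun R z => prefixBits u z = chainBits u (advQ n R f k))
  · exact fun R hR b => simS_congr fun m hm => Function.update_of_ne (hR.1 m hm) b R
  · intro R hR b
    have hquery : advQ n (Function.update R (simS n u v R X i) b) f k = advQ n R f k :=
      advQ_congr fun t ht => Function.update_of_ne (hR.2.1 t ht) b R
    simp only [hquery]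
  · exact fun R hR => hR.2.2
  · exact fun R => (unifProb_prefixBits_eq hun _).le

theorem exists_freshGuess_of_advQ_eq_simS_succ (hn : 2 * u ≤ n) {X : Fin v → Bits u}
    {f : List (Bits n) → Bits n} {R : Bits n → Bits n} {j k : ℕ}
    (hquery : advQ n R f k = simS n u v R X (j + 1))
    (hfresh : ∀ t < k, advQ n R f t ≠ simS n u v R X j) :
    ∃ i ≤ j, FreshGuess X f i k R := by
  have hoccurs : ∃ i, simS n u v R X i = simS n u v R X j := ⟨j, rfl⟩
  obtain ⟨i, ⟨hi, hij⟩, hmin⟩ : ∃ i, (simS n u v R X i = simS n u v R X j ∧ i ≤ j) ∧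
      ∀ m < i, simS n u v R X m ≠ simS n u v R X j := by
    classical
    exact ⟨Nat.find hoccurs, ⟨Nat.find_spec hoccurs, Nat.find_min' hoccurs rfl⟩,
      fun m hm => Nat.find_min hoccurs hm⟩
  refine ⟨i, hij, ?_, ?_, ?_⟩
  · rwa [hi]
  · rwa [hi]
  · rw [hi, hquery, chainBits_simS hn, simR_succ]

end Chain

theorem stmt6_general (n u v w : ℕ) (hn : 2 * u ≤ n) (hw : 1 ≤ w) (Q : ℕ) (X : Fin v → Bits u)
    (f : List (Bits n) → Bits n) :
    unifProb (fun R : Bits n → Bits n =>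
      ∃ j, 1 ≤ j ∧ j ≤ w - 1 ∧ ∃ k, 1 ≤ k ∧ k ≤ Q ∧
        advQ n R f (k - 1) = simS n u v R X j ∧
        ∀ t < k - 1, advQ n R f t ≠ simS n u v R X (j - 1)) ≤
    ((w : ℝ) - 1) * Q / (2 : ℝ) ^ u := by
  let pairs := Finset.range (w - 1) ×ˢ Finset.range Q
  calc
    _ ≤ unifProb (fun R => ∃ p ∈ pairs, FreshGuess X f p.1 p.2 R) := by
        apply unifProb_mono
        rintro R ⟨j, hj, hjw, k, hk, hkQ, hquery, hfresh⟩
        rw [← Nat.sub_add_cancel hj] at hquery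
        obtain ⟨i, hij, hguess⟩ := exists_freshGuess_of_advQ_eq_simS_succ hn hquery hfresh
        have hmem : (i, k - 1) ∈ pairs := by
          simp only [pairs, Finset.mem_product, Finset.mem_range]
          omega
        exact ⟨(i, k - 1), hmem, hguess⟩
    _ ≤ ∑ p ∈ pairs, unifProb (FreshGuess X f p.1 p.2) := unifProb_exists_mem_le _ _
    _ ≤ pairs.card • (1 / 2 ^ u) :=
        Finset.sum_le_card_nsmul _ _ _ fun p _ => unifProb_freshGuess_le (by omega) X f p.1 p.2
    _ = ((w : ℝ) - 1) * Q / 2 ^ u := by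
        simp only [pairs, Finset.card_product, Finset.card_range, nsmul_eq_mul, Nat.cast_mul,
          Nat.cast_sub hw, Nat.cast_one, mul_one_div]

/-- **Union-bound corollary of Lemma `nojump`.**
In the SimLine setting, for any deterministic adaptive oracle algorithm `nxt` and any
bound `Q ≥ 1` on the number of queries, the probability over uniformly random `(RO, X)`
that for some `1 ≤ j ≤ w−1` and some `1 ≤ k ≤ Q` the `k`-th query equals `s_{j+1}` while
no earlier query equals `s_j`, is at most `(w−1)·Q·2^(−u)`. -/
theorem stmt6 (n u v w : ℕ) (hu : 1 ≤ u) (hn : 2 * u ≤ n) (hv : 2 ≤ v) (hw : 2 ≤ w)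
    (Q : ℕ) (hQ : 1 ≤ Q)
    (nxt : (Fin v → Bits u) → List (Bits n) → Bits n) :
    unifProb (fun ω : (Bits n → Bits n) × (Fin v → Bits u) =>
      ∃ j, 1 ≤ j ∧ j ≤ w - 1 ∧ ∃ k, 1 ≤ k ∧ k ≤ Q ∧
        advQ n ω.1 (nxt ω.2) (k - 1) = simS n u v ω.1 ω.2 j ∧
        ∀ t < k - 1, advQ n ω.1 (nxt ω.2) t ≠ simS n u v ω.1 ω.2 (j - 1)) ≤
    ((w : ℝ) - 1) * Q / (2 : ℝ) ^ u :=
  unifProb_prod_le fun X => stmt6_general n u v w hn (by omega) Q X (nxt X)
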